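/- There are exactly 24 Boolean functions f: F_2^3 → F_2 of algebraic degree exactly 2 with zero constant term in their ANF such that f is semi-bent and the function f*: F_2^n → F_2 given by the CA-based construction is semi-bent for every n with 3 ≤ n ≤ 20; exactly 8 of these 24 functions additionally have the property that f* is balanced for every n with 3 ≤ n ≤ 20. -/

import Mathlib

/-- The CA-based construction: given a local rule `f` of `m` variables and `n ≥ m`,
the `n`-variable function `f*` is the XOR of all output cells of the no-boundary CA. -/
def caStar (m n : ℕ) (h : m ≤ n) (f : (Fin m → ZMod 2) → ZMod 2) :
    (Fin n → ZMod 2) → ZMod 2 :=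
  fun x => ∑ i : Fin (n - m + 1),
    f (fun j => x ⟨i.val + j.val, by have hi := i.isLt; have hj := j.isLt; omega⟩)

/-- The ANF coefficient `a_I` of a Boolean function, via the Möbius transform:
`a_I = ⊕_{x : supp(x) ⊆ I} f(x)`. -/
def anf {n : ℕ} (f : (Fin n → ZMod 2) → ZMod 2) (I : Finset (Fin n)) : ZMod 2 :=
  ∑ x ∈ Finset.univ.filter (fun x : Fin n → ZMod 2 => ∀ i, x i = 1 → i ∈ I), f x

/-- The algebraic degree of a Boolean function: `max {|I| : a_I ≠ 0}` (0 for the zero function). -/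
def algDegree {n : ℕ} (f : (Fin n → ZMod 2) → ZMod 2) : ℕ :=
  (Finset.univ.filter fun I : Finset (Fin n) => anf f I ≠ 0).sup Finset.card

/-- The Walsh transform `W_f(a) = Σ_x (-1)^(f(x) ⊕ a·x)`. -/
def walsh {n : ℕ} (f : (Fin n → ZMod 2) → ZMod 2) (a : Fin n → ZMod 2) : ℤ :=
  ∑ x : Fin n → ZMod 2, (-1 : ℤ) ^ (f x + ∑ i, a i * x i).val

/-- The semi-bent value `λ`: `2^((n+1)/2)` for odd `n`, `2^((n+2)/2)` for even `n`. -/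
def sbLambda (n : ℕ) : ℤ := if Odd n then 2 ^ ((n + 1) / 2) else 2 ^ ((n + 2) / 2)

/-- A Boolean function is semi-bent if its Walsh transform takes only the values `0, λ, -λ`. -/
def semiBent {n : ℕ} (f : (Fin n → ZMod 2) → ZMod 2) : Prop :=
  ∀ a, walsh f a = 0 ∨ walsh f a = sbLambda n ∨ walsh f a = -sbLambda n

/-- A Boolean function is balanced if it takes the value 1 exactly `2^(n-1)` times. -/
def balanced {n : ℕ} (f : (Fin n → ZMod 2) → ZMod 2) : Prop :=
  (Finset.univ.filter fun x => f x = 1).card = 2 ^ (n - 1)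

/-- `b` is a linear structure of `g` if the derivative `D_b g(x) = g(x) ⊕ g(x ⊕ b)` is constant. -/
def isLinearStructure {n : ℕ} (g : (Fin n → ZMod 2) → ZMod 2)
    (b : Fin n → ZMod 2) : Prop :=
  (∀ x, g x + g (x + b) = 0) ∨ (∀ x, g x + g (x + b) = 1)

abbrev B2 := ZMod 2

def sg (t : ZMod 2) : ℤ := if t = 0 then 1 else -1

lemma sg_eq (t : ZMod 2) : (-1 : ℤ) ^ t.val = sg t := by revert t; decide

lemma sg_add (s t : ZMod 2) : sg (s + t) = sg s * sg t := by revert s t; decide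

def GG (f : (Fin 3 → B2) → B2) (n : ℕ) (x : Fin (n + 2) → B2) : B2 :=
  ∑ i : Fin n, f (fun j => x ⟨i.val + j.val, by have hi := i.isLt; have hj := j.isLt; omega⟩)

lemma caStar_eq (f : (Fin 3 → B2) → B2) (m : ℕ) (h : 3 ≤ m + 3) :
    caStar 3 (m + 3) h f = GG f (m + 1) := rfl

lemma GG_cons (f : (Fin 3 → B2) → B2) (n : ℕ) (y : B2) (x : Fin (n + 2) → B2) :
    GG f (n + 1) (Fin.cons y x : Fin (n + 3) → B2) = f ![y, x 0, x 1] + GG f n x := by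
  unfold GG
  rw [Fin.sum_univ_succ]
  congr 1
  · congr 1
    funext j
    fin_cases j <;> rfl
  · refine Finset.sum_congr rfl fun i _ => ?_
    congr 1
    funext j
    have : (⟨i.succ.val + j.val, by have hi := i.isLt; have hj := j.isLt; simp; omega⟩ : Fin (n + 3))
        = Fin.succ ⟨i.val + j.val, by have hi := i.isLt; have hj := j.isLt; omega⟩ := by
      ext; simp; omega
    rw [this, Fin.cons_succ]

lemma sum_cons {n : ℕ} (F : (Fin (n + 1) → B2) → ℤ) :
    ∑ x, F x = ∑ y : B2, ∑ x : Fin n → B2, F (Fin.cons y x) := by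
  rw [← Fintype.sum_prod_type' (f := fun (y : B2) (x : Fin n → B2) => F (Fin.cons y x))]
  exact (Fintype.sum_equiv (Fin.consEquiv (fun _ : Fin (n + 1) => B2)) _ _ (fun _ => rfl)).symm

def TT {n : ℕ} (f : (Fin 3 → B2) → B2) (a x : Fin (n + 2) → B2) : ℤ :=
  sg (GG f n x + ∑ i, a i * x i)

lemma TT_cons {n : ℕ} (f : (Fin 3 → B2) → B2) (a : Fin (n + 3) → B2) (y : B2)
    (x : Fin (n + 2) → B2) :
    TT (n := n + 1) f a (Fin.cons y x : Fin (n + 3) → B2) =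
      sg (a 0 * y) * (sg (f ![y, x 0, x 1]) * TT f (Fin.tail a) x) := by
  unfold TT
  rw [GG_cons, Fin.sum_univ_succ, ← sg_add, ← sg_add]
  congr 1
  simp only [Fin.cons_zero, Fin.cons_succ, Fin.tail]
  ring

def UU (f : (Fin 3 → B2) → B2) (n : ℕ) (a : Fin (n + 2) → B2) (y0 y1 : B2) : ℤ :=
  ∑ x : Fin n → B2, TT f a (Fin.cons y0 (Fin.cons y1 x : Fin (n + 1) → B2) : Fin (n + 2) → B2)

lemma walsh_GG (f : (Fin 3 → B2) → B2) (n : ℕ) (a : Fin (n + 2) → B2) :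
    walsh (GG f n) a = ∑ y0, ∑ y1, UU f n a y0 y1 := by
  unfold walsh
  simp only [sg_eq]
  rw [sum_cons]
  refine Finset.sum_congr rfl fun y _ => ?_
  rw [sum_cons]
  rfl

def stp (s : B2 → B2 → B2 → B2) (a : B2) (u : B2 → B2 → ℤ) (y0 y1 : B2) : ℤ :=
  sg (a * y0) * (sg (s y0 y1 0) * u y1 0 + sg (s y0 y1 1) * u y1 1)

lemma UU_succ (f : (Fin 3 → B2) → B2) (n : ℕ) (a : Fin (n + 3) → B2) :
    UU f (n + 1) a = stp (fun x y z => f ![x, y, z]) (a 0) (UU f n (Fin.tail a)) := by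
  funext y0 y1
  unfold UU stp
  rw [sum_cons]
  have h2 : ∀ F : B2 → ℤ, ∑ z, F z = F 0 + F 1 := fun F => Fin.sum_univ_two F
  rw [h2]
  simp only [TT_cons, Finset.mul_sum, mul_add]
  rfl

lemma UU_zero (f : (Fin 3 → B2) → B2) (a : Fin 2 → B2) (y0 y1 : B2) :
    UU f 0 a y0 y1 = sg (a 0 * y0 + a 1 * y1) := by
  unfold UU TT GG
  simp [Fin.sum_univ_two]

abbrev PP := B2 × B2 × B2 × B2 × B2 × B2

def qd (p : PP) (x y z : B2) : B2 :=
  p.1 * (x * y) + p.2.1 * (y * z) + p.2.2.1 * (x * z) + p.2.2.2.1 * x + p.2.2.2.2.1 * y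
    + p.2.2.2.2.2 * z

def qf (p : PP) (x : Fin 3 → B2) : B2 := qd p (x 0) (x 1) (x 2)

/-- vectors as quadruples -/
abbrev V4 := ℤ × ℤ × ℤ × ℤ

def fn (v : V4) (y0 y1 : B2) : ℤ :=
  if y0 = 0 then (if y1 = 0 then v.1 else v.2.1) else (if y1 = 0 then v.2.2.1 else v.2.2.2)

def tup (u : B2 → B2 → ℤ) : V4 := (u 0 0, u 0 1, u 1 0, u 1 1)

lemma fn_tup (u : B2 → B2 → ℤ) : fn (tup u) = u := by
  funext y0 y1
  have : ∀ t : B2, t = 0 ∨ t = 1 := by decide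
  rcases this y0 with rfl | rfl <;> rcases this y1 with rfl | rfl <;> rfl

def quadPart (p : PP) : B2 × B2 × B2 := (p.1, p.2.1, p.2.2.1)

def LA (q : B2 × B2 × B2) : List V4 :=
  if q = (1, 0, 0) then
    [(-2, 0, -2, 0), (-2, 0, 2, 0), (0, -2, 0, -2), (0, -2, 0, 2), (0, 0, 0, 0), (0, 2, 0, -2),
     (0, 2, 0, 2), (1, -1, -1, 1), (1, -1, 1, -1), (1, 1, -1, -1), (1, 1, 1, 1), (2, 0, -2, 0),
     (2, 0, 2, 0)]
  else
    [(-1, -1, -1, -1), (-1, -1, 1, 1), (-1, 1, -1, 1), (-1, 1, 1, -1), (1, -1, -1, 1),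
     (1, -1, 1, -1), (1, 1, -1, -1), (1, 1, 1, 1)]

def LB (q : B2 × B2 × B2) : List V4 :=
  if q = (1, 0, 0) then
    [(-2, -2, -2, 2), (-2, -2, 2, -2), (-2, 2, -2, -2), (-2, 2, 2, 2), (0, 0, 0, 0),
     (2, -2, -2, -2), (2, -2, 2, 2), (2, 2, -2, 2), (2, 2, 2, -2)]
  else if q = (0, 1, 0) then
    [(-2, 0, -2, 0), (-2, 0, 2, 0), (0, -2, 0, -2), (0, -2, 0, 2), (0, 2, 0, -2), (0, 2, 0, 2),
     (2, 0, -2, 0), (2, 0, 2, 0)]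
  else
    [(-2, 0, 0, -2), (-2, 0, 0, 2), (0, -2, -2, 0), (0, -2, 2, 0), (0, 2, -2, 0), (0, 2, 2, 0),
     (2, 0, 0, -2), (2, 0, 0, 2)]

def goodQ (q : B2 × B2 × B2) : Prop := q = (1, 0, 0) ∨ q = (0, 1, 0) ∨ q = (1, 1, 1)

instance (q : B2 × B2 × B2) : Decidable (goodQ q) := by unfold goodQ; infer_instance

def dbl (v : V4) : V4 := (2 * v.1, 2 * v.2.1, 2 * v.2.2.1, 2 * v.2.2.2)

def sum4 (v : V4) : ℤ := v.1 + v.2.1 + v.2.2.1 + v.2.2.2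

lemma init_mem : ∀ q, goodQ q → ∀ a b : B2,
    tup (fun y0 y1 => sg (a * y0 + b * y1)) ∈ LA q := by decide +kernel

lemma stepA : ∀ p : PP, goodQ (quadPart p) → ∀ a : B2, ∀ v ∈ LA (quadPart p),
    tup (stp (qd p) a (fn v)) ∈ LB (quadPart p) := by decide +kernel

lemma stepB : ∀ p : PP, goodQ (quadPart p) → ∀ a : B2, ∀ v ∈ LB (quadPart p),
    ∃ w ∈ LA (quadPart p), tup (stp (qd p) a (fn v)) = dbl w := by decide +kernel

lemma sumA : ∀ q, goodQ q → ∀ v ∈ LA q, sum4 v = 0 ∨ sum4 v = 4 ∨ sum4 v = -4 := by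
  decide +kernel

lemma sumB : ∀ q, goodQ q → ∀ v ∈ LB q, sum4 v = 0 ∨ sum4 v = 4 ∨ sum4 v = -4 := by
  decide +kernel

lemma stp_smul (s : B2 → B2 → B2 → B2) (a : B2) (c : ℤ) (u : B2 → B2 → ℤ) :
    stp s a (fun x y => c * u x y) = fun x y => c * stp s a u x y := by
  funext x y; unfold stp; ring

lemma qf_fun (p : PP) : (fun x y z => qf p ![x, y, z]) = qd p := rfl

lemma fn_dbl (w : V4) : fn (dbl w) = fun x y => 2 * fn w x y := by
  funext x y; unfold fn dbl; split_ifs <;> rfl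

lemma stepA' (p : PP) (hp : goodQ (quadPart p)) (n k : ℕ) (a : Fin (n + 3) → B2)
    (h : ∃ v ∈ LA (quadPart p), UU (qf p) n (Fin.tail a) = fun x y => 2 ^ k * fn v x y) :
    ∃ v ∈ LB (quadPart p), UU (qf p) (n + 1) a = fun x y => 2 ^ k * fn v x y := by
  obtain ⟨v, hv, e⟩ := h
  refine ⟨_, stepA p hp (a 0) v hv, ?_⟩
  rw [UU_succ, e, stp_smul, qf_fun, fn_tup]

lemma stepB' (p : PP) (hp : goodQ (quadPart p)) (n k : ℕ) (a : Fin (n + 3) → B2)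
    (h : ∃ v ∈ LB (quadPart p), UU (qf p) n (Fin.tail a) = fun x y => 2 ^ k * fn v x y) :
    ∃ v ∈ LA (quadPart p), UU (qf p) (n + 1) a = fun x y => 2 ^ (k + 1) * fn v x y := by
  obtain ⟨v, hv, e⟩ := h
  obtain ⟨w, hw, e2⟩ := stepB p hp (a 0) v hv
  refine ⟨w, hw, ?_⟩
  have e3 : stp (qd p) (a 0) (fn v) = fun x y => 2 * fn w x y := by
    rw [← fn_dbl, ← e2, fn_tup]
  rw [UU_succ, e, stp_smul, qf_fun, e3]
  funext x y
  ring

lemma inv (p : PP) (hp : goodQ (quadPart p)) (k : ℕ) :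
    ∀ a, ∃ v ∈ LA (quadPart p), UU (qf p) (2 * k) a = fun x y => 2 ^ k * fn v x y := by
  induction k with
  | zero =>
    intro a
    refine ⟨_, init_mem _ hp (a 0) (a 1), ?_⟩
    rw [fn_tup]
    funext x y
    rw [pow_zero, one_mul]
    exact UU_zero _ _ _ _
  | succ k ih =>
    intro a
    exact stepB' p hp (2 * k + 1) k a (stepA' p hp (2 * k) k _ (ih _))

lemma inv' (p : PP) (hp : goodQ (quadPart p)) (k : ℕ) (a : Fin (2 * k + 1 + 2) → B2) :
    ∃ v ∈ LB (quadPart p), UU (qf p) (2 * k + 1) a = fun x y => 2 ^ k * fn v x y :=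
  stepA' p hp (2 * k) k a (inv p hp k _)

lemma sumU (u : B2 → B2 → ℤ) : ∑ y0, ∑ y1, u y0 y1 = sum4 (tup u) := by
  have h2 : ∀ F : B2 → ℤ, ∑ z, F z = F 0 + F 1 := fun F => Fin.sum_univ_two F
  simp only [h2, sum4, tup]
  ring

lemma sum4_smul (c : ℤ) (v : V4) : sum4 (tup fun x y => c * fn v x y) = c * sum4 v := by
  simp [sum4, tup, fn]
  ring

lemma good_semiBent (p : PP) (hp : goodQ (quadPart p)) (n : ℕ) : semiBent (GG (qf p) n) := by
  intro a
  rw [walsh_GG, sumU]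
  obtain ⟨k, rfl | rfl⟩ := n.even_or_odd'
  · have hl : sbLambda (2 * k + 2) = 2 ^ k * 4 := by
      have h1 : ¬ Odd (2 * k + 2) := by rw [Nat.not_odd_iff_even]; exact ⟨k + 1, by ring⟩
      have h2 : (2 * k + 2 + 2) / 2 = k + 2 := by omega
      rw [sbLambda, if_neg h1, h2]; ring
    obtain ⟨v, hv, e⟩ := inv p hp k a
    rw [e, sum4_smul, hl]
    rcases sumA _ hp v hv with h | h | h <;> rw [h] <;> simp
  · have hl : sbLambda (2 * k + 1 + 2) = 2 ^ k * 4 := by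
      have h1 : Odd (2 * k + 1 + 2) := ⟨k + 1, by ring⟩
      have h2 : (2 * k + 1 + 2 + 1) / 2 = k + 2 := by omega
      rw [sbLambda, if_pos h1, h2]; ring
    obtain ⟨v, hv, e⟩ := inv' p hp k a
    rw [e, sum4_smul, hl]
    rcases sumB _ hp v hv with h | h | h <;> rw [h] <;> simp

/-- value at zero -/
def UZ (p : PP) : ℕ → V4
  | 0 => (1, 1, 1, 1)
  | n + 1 => tup (stp (qd p) 0 (fn (UZ p n)))

lemma UU_UZ (p : PP) (n : ℕ) : UU (qf p) n 0 = fn (UZ p n) := by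
  induction n with
  | zero =>
    funext x y
    rw [UU_zero]
    have : ∀ x y : B2, sg (0 * x + 0 * y) = fn (1, 1, 1, 1) x y := by decide
    exact this x y
  | succ n ih =>
    rw [UU_succ, UZ, fn_tup, qf_fun, ← ih]
    rfl

lemma tup_fn (v : V4) : tup (fn v) = v := rfl

lemma walsh_zero (p : PP) (n : ℕ) : walsh (GG (qf p) n) 0 = sum4 (UZ p n) := by
  rw [walsh_GG, sumU, UU_UZ, tup_fn]

lemma bad2 : ∀ p : PP, ¬ goodQ (quadPart p) → quadPart p ≠ (0, 0, 0) →
    ¬ (sum4 (UZ p 2) = 0 ∨ sum4 (UZ p 2) = 8 ∨ sum4 (UZ p 2) = -8) := by decide +kernel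

lemma bad_semiBent (p : PP) (hp : ¬ goodQ (quadPart p)) (h0 : quadPart p ≠ (0, 0, 0)) :
    ¬ semiBent (GG (qf p) 2) := by
  intro h
  have := h 0
  rw [walsh_zero] at this
  exact bad2 p hp h0 this

lemma balanced_iff {n : ℕ} (f : (Fin (n + 1) → B2) → B2) : balanced f ↔ walsh f 0 = 0 := by
  have h1 : walsh f 0 = 2 ^ (n + 1) - 2 * ((Finset.univ.filter fun x => f x = 1).card : ℤ) := by
    have e : ∀ t : B2, sg t = 1 - 2 * (if t = 1 then 1 else 0) := by decide
    unfold walsh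
    simp only [sg_eq, e]
    rw [Finset.sum_sub_distrib, ← Finset.mul_sum]
    simp
  rw [h1, balanced]
  simp only [Nat.add_sub_cancel]
  rw [pow_succ, ← Nat.cast_inj (R := ℤ)]
  push_cast
  constructor <;> intro h <;> linarith

def goodB (p : PP) : Prop :=
  (quadPart p = (1, 0, 0) ∧ p.2.2.2.2.2 = 1) ∨ (quadPart p = (0, 1, 0) ∧ p.2.2.2.1 = 1)

instance (p : PP) : Decidable (goodB p) := by unfold goodB; infer_instance

lemma notB : ∀ p : PP, goodQ (quadPart p) → ¬ goodB p →
    ¬ (sum4 (UZ p 1) = 0 ∧ sum4 (UZ p 2) = 0 ∧ sum4 (UZ p 4) = 0) := by decide +kernel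

lemma isB : ∀ p : PP, goodB p → ∀ n : Fin 19, 1 ≤ n.val → sum4 (UZ p n.val) = 0 := by
  decide +kernel

lemma anf_empty (f : (Fin 3 → B2) → B2) : anf f ∅ = f ![0, 0, 0] := by
  have : (Finset.univ.filter (fun x : Fin 3 → ZMod 2 => ∀ i, x i = 1 → i ∈ (∅ : Finset (Fin 3))))
    = {![0, 0, 0]} := by decide +kernel
  rw [anf, this, Finset.sum_singleton]

lemma anf_univ (f : (Fin 3 → B2) → B2) : anf f Finset.univ = f ![0, 0, 0] + f ![0, 0, 1]
    + f ![0, 1, 0] + f ![0, 1, 1] + f ![1, 0, 0] + f ![1, 0, 1] + f ![1, 1, 0] + f ![1, 1, 1] := by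
  have : (Finset.univ.filter (fun x : Fin 3 → ZMod 2 => ∀ i, x i = 1 → i ∈ (Finset.univ : Finset (Fin 3))))
    = {![0, 0, 0], ![0, 0, 1], ![0, 1, 0], ![0, 1, 1], ![1, 0, 0], ![1, 0, 1], ![1, 1, 0], ![1, 1, 1]} := by decide +kernel
  rw [anf, this]
  repeat rw [Finset.sum_insert (by decide +kernel)]
  rw [Finset.sum_singleton]
  ring

lemma deg_lt (f : (Fin 3 → B2) → B2) (h : algDegree f = 2) : anf f Finset.univ = 0 := by
  by_contra hne
  have : (Finset.univ : Finset (Fin 3)).card ≤ algDegree f :=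
    Finset.le_sup (f := Finset.card) (by simp [hne])
  rw [h] at this
  simp at this

lemma qf_deg : ∀ p : PP, algDegree (qf p) = 2 ↔ quadPart p ≠ (0, 0, 0) := by decide +kernel

lemma exists_p (f : (Fin 3 → B2) → B2) (h : algDegree f = 2) (h0 : anf f ∅ = 0) :
    ∃ p, qf p = f := by
  have h1 := deg_lt f h
  rw [anf_univ] at h1
  rw [anf_empty] at h0
  refine ⟨(f ![1, 1, 0] + f ![1, 0, 0] + f ![0, 1, 0], f ![0, 1, 1] + f ![0, 1, 0] + f ![0, 0, 1],
    f ![1, 0, 1] + f ![1, 0, 0] + f ![0, 0, 1], f ![1, 0, 0], f ![0, 1, 0], f ![0, 0, 1]), ?_⟩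
  have key : ∀ a b c : B2, qf (f ![1, 1, 0] + f ![1, 0, 0] + f ![0, 1, 0],
    f ![0, 1, 1] + f ![0, 1, 0] + f ![0, 0, 1],
    f ![1, 0, 1] + f ![1, 0, 0] + f ![0, 0, 1], f ![1, 0, 0], f ![0, 1, 0], f ![0, 0, 1])
      ![a, b, c] = f ![a, b, c] := by
    have : ∀ t : B2, t = 0 ∨ t = 1 := by decide
    clear h
    intro a b c
    unfold qf qd
    simp only [Matrix.cons_val]
    rcases this a with rfl | rfl <;> rcases this b with rfl | rfl <;>
      rcases this c with rfl | rfl <;>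
    generalize f ![0, 0, 0] = f0 at * <;>
    generalize f ![0, 0, 1] = f1 at * <;> generalize f ![0, 1, 0] = f2 at * <;>
    generalize f ![0, 1, 1] = f3 at * <;> generalize f ![1, 0, 0] = f4 at * <;>
    generalize f ![1, 0, 1] = f5 at * <;> generalize f ![1, 1, 0] = f6 at * <;>
    generalize f ![1, 1, 1] = f7 at * <;> clear this <;> revert h1 h0 <;>
    revert f0 f1 f2 f3 f4 f5 f6 f7 <;> decide +kernel
  funext x
  have : x = ![x 0, x 1, x 2] := by funext i; fin_cases i <;> rfl
  rw [this]
  exact key _ _ _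

lemma qf_inj : Function.Injective qf := by
  intro p q h
  have e : ∀ x, qf p x = qf q x := fun x => by rw [h]
  have h1 := e ![1, 0, 0]
  have h2 := e ![0, 1, 0]
  have h3 := e ![0, 0, 1]
  have h4 := e ![1, 1, 0]
  have h5 := e ![0, 1, 1]
  have h6 := e ![1, 0, 1]
  obtain ⟨a, b, c, d, e, f⟩ := p
  obtain ⟨a', b', c', d', e', f'⟩ := q
  simp [qf, qd] at h1 h2 h3 h4 h5 h6
  subst h1 h2 h3
  simp at h4 h5 h6
  simp_all

lemma semi_iff (p : PP) : (algDegree (qf p) = 2 ∧ anf (qf p) ∅ = 0 ∧ semiBent (qf p) ∧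
      ∀ n (h : 3 ≤ n), n ≤ 20 → semiBent (caStar 3 n h (qf p))) ↔ goodQ (quadPart p) := by
  rw [qf_deg]
  constructor
  · rintro ⟨h1, -, -, h⟩
    by_contra hn
    exact bad_semiBent p hn h1 (h 4 (by norm_num) (by norm_num))
  · intro h
    have hs : ∀ n (h : 3 ≤ n), semiBent (caStar 3 n h (qf p)) := by
      intro n hn
      obtain ⟨m, rfl⟩ := Nat.exists_eq_add_of_le' hn
      exact good_semiBent p h (m + 1)
    refine ⟨?_, ?_, ?_, fun n hn _ => hs n hn⟩
    · intro h0
      rw [h0] at h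
      revert h
      decide
    · rw [anf_empty]
      simp [qf, qd]
    · have e : caStar 3 3 le_rfl (qf p) = qf p := by
        funext x
        show ∑ i : Fin 1, _ = _
        rw [Fin.sum_univ_one]
        congr 1
        funext j
        fin_cases j <;> rfl
      rw [← e]
      exact hs 3 le_rfl

lemma bal_iff (p : PP) (hp : goodQ (quadPart p)) :
    (∀ n (h : 3 ≤ n), n ≤ 20 → balanced (caStar 3 n h (qf p))) ↔ goodB p := by
  have key : ∀ m (h : 3 ≤ m + 3), balanced (caStar 3 (m + 3) h (qf p)) ↔
      sum4 (UZ p (m + 1)) = 0 := by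
    intro m h
    rw [balanced_iff, ← walsh_zero]
    rfl
  constructor
  · intro h
    by_contra hn
    refine notB p hp hn ⟨?_, ?_, ?_⟩
    · exact (key 0 _).1 (h 3 (by norm_num) (by norm_num))
    · exact (key 1 _).1 (h 4 (by norm_num) (by norm_num))
    · exact (key 3 _).1 (h 6 (by norm_num) (by norm_num))
  · intro h n hn hn2
    obtain ⟨m, rfl⟩ := Nat.exists_eq_add_of_le' hn
    rw [key]
    exact isB p h ⟨m + 1, by omega⟩ (by simp)

lemma count (P : ((Fin 3 → B2) → B2) → Prop) (Q : PP → Prop) [DecidablePred Q]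
    (h1 : ∀ f, P f → ∃ p, qf p = f) (h2 : ∀ p, P (qf p) ↔ Q p) :
    Nat.card {f // P f} = (Finset.univ.filter Q).card := by
  have : {f | P f} = qf '' {p | Q p} := by
    ext f
    constructor
    · intro hf
      obtain ⟨p, rfl⟩ := h1 f hf
      exact ⟨p, (h2 p).1 hf, rfl⟩
    · rintro ⟨p, hp, rfl⟩
      exact (h2 p).2 hp
  have h3 : Nat.card {f // P f} = Set.ncard {f | P f} := rfl
  rw [h3, this, Set.ncard_image_of_injective _ qf_inj, ← Set.ncard_coe_finset]
  simp

/-- there are exactly 24 quadratic 3-variable functions (zero constant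
term) that are semi-bent and yield semi-bent `f*` for all `3 ≤ n ≤ 20`; exactly 8
of them moreover yield balanced `f*` for all `3 ≤ n ≤ 20`. -/
theorem quadratic3_semibent_count :
    Nat.card {f : (Fin 3 → ZMod 2) → ZMod 2 //
      algDegree f = 2 ∧ anf f ∅ = 0 ∧ semiBent f ∧
      ∀ n (h : 3 ≤ n), n ≤ 20 → semiBent (caStar 3 n h f)} = 24 ∧
    Nat.card {f : (Fin 3 → ZMod 2) → ZMod 2 //
      algDegree f = 2 ∧ anf f ∅ = 0 ∧ semiBent f ∧
      (∀ n (h : 3 ≤ n), n ≤ 20 → semiBent (caStar 3 n h f)) ∧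
      (∀ n (h : 3 ≤ n), n ≤ 20 → balanced (caStar 3 n h f))} = 8 := by
  constructor
  · rw [count _ (fun p => goodQ (quadPart p)) (fun f hf => exists_p f hf.1 hf.2.1) semi_iff]
    decide +kernel
  · rw [count _ (fun p => goodQ (quadPart p) ∧ goodB p) (fun f hf => exists_p f hf.1 hf.2.1)]
    · decide +kernel
    · intro p
      constructor
      · rintro ⟨h1, h2, h3, h4, h5⟩
        have hq := (semi_iff p).1 ⟨h1, h2, h3, h4⟩
        exact ⟨hq, (bal_iff p hq).1 h5⟩
      · rintro ⟨hq, hb⟩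
        obtain ⟨h1, h2, h3, h4⟩ := (semi_iff p).2 hq
        exact ⟨h1, h2, h3, h4, (bal_iff p hq).2 hb⟩
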